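/- arXiv:0811.1276 — 2 statements merged into one kernel-verified Lean document; each statement's English description precedes it below -/
import Mathlib

section
/- Let B be a 2T×2T complex antisymmetric matrix with nonzero Pfaffian, C a 2N×2N complex antisymmetric matrix with nonzero Pfaffian, and A an arbitrary 2N×2T complex matrix. Then Pf(C^{-⊤} − Aᵀ B A)/Pf(C^{-⊤}) = Pf(B^{-⊤} − A C Aᵀ)/Pf(B^{-⊤}), where M^{-⊤} denotes the transpose of the inverse of M (Rains' Pfaffian Cauchy–Binet formula). -/
/-!
The skew-symmetric block matrix `(C^{-⊤}, Aᵀ; -A, B^{-⊤})` is congruent, through unitriangular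
matrices, both to `diag(C^{-⊤}, B^{-⊤} - A C Aᵀ)` and to `diag(C^{-⊤} - Aᵀ B A, B^{-⊤})`. Comparing
Pfaffians gives the formula, once the Pfaffian is known to satisfy `Pf(S M Sᵀ) = det S * Pf M` and
to be multiplicative on block-diagonal matrices.

The congruence rule (`pfSum_conj`) holds because the Pfaffian of `S M Sᵀ` is an alternating form in
the rows of `S`. For multiplicativity (`pfSum_blk_diag`), every skew-symmetric matrix is written as
`S J Sᵀ` with `J` the standard symplectic matrix (`exists_eq_conj_stdForm`), which by the congruence
rule reduces the claim to `J`; all that is needed there is that the Pfaffian of `J` is nonzero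
(`pfSum_stdForm_ne_zero`). The same normal form shows that a nonzero Pfaffian forces a nonzero
determinant. Since the formula is about ratios, the normalising constant of the Pfaffian cancels, and
the argument is carried out for the unnormalised sum `pfSum`.
-/

open Matrix

/-- The Pfaffian of a `2n × 2n` matrix, defined by
`Pf(M) = (1/(2^n n!)) Σ_{σ ∈ S_{2n}} sgn(σ) ∏_{i=1}^n M_{σ(2i−1), σ(2i)}`. -/
noncomputable def pfaffian {F : Type*} [Field F] {n : ℕ} (M : Matrix (Fin (2*n)) (Fin (2*n)) F) : F :=
  ((2:F)^n * (n.factorial : F))⁻¹ *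
    ∑ σ : Equiv.Perm (Fin (2*n)), ((Equiv.Perm.sign σ : ℤ) : F) *
      ∏ i : Fin n, M (σ ⟨2*i.1, by have := i.2; omega⟩) (σ ⟨2*i.1+1, by have := i.2; omega⟩)

set_option linter.unusedSectionVars false

namespace PfaffianCB

variable {α β : Type*} [Fintype α] [DecidableEq α] [Fintype β] [DecidableEq β]

/-- The unnormalised Pfaffian: the signed sum over all permutations, without the factor
`1 / (2 ^ n * n!)`. The index set is `α × Fin 2`, the pairs being the fibres over `α`, so that
disjoint unions of index sets need no arithmetic. -/
def pfSum (M : Matrix (α × Fin 2) (α × Fin 2) ℂ) : ℂ :=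
  ∑ σ : Equiv.Perm (α × Fin 2), ((Equiv.Perm.sign σ : ℤ) : ℂ) *
    ∏ i : α, M (σ (i, 0)) (σ (i, 1))

/-- The multilinear form `v ↦ ∏ i, v (i, 0)ᵀ M v (i, 1)`, whose alternatization is the Pfaffian sum
of `M` pulled back along the family `v`. -/
def pairForm (M : Matrix (α × Fin 2) (α × Fin 2) ℂ) :
    MultilinearMap ℂ (fun _ : α × Fin 2 => (α × Fin 2 → ℂ)) ℂ :=
  MultilinearMap.mk' (fun v => ∏ i : α, v (i, 0) ⬝ᵥ M *ᵥ v (i, 1))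
    (by
      rintro v ⟨i, b⟩ x y
      have h : ∀ w : α × Fin 2 → (α × Fin 2 → ℂ), ∀ z, ∏ j ∈ {i}ᶜ,
          (Function.update w (i, b) z (j, 0) ⬝ᵥ M *ᵥ Function.update w (i, b) z (j, 1))
          = ∏ j ∈ {i}ᶜ, w (j, 0) ⬝ᵥ M *ᵥ w (j, 1) := by
        intro w z
        refine Finset.prod_congr rfl fun j hj => ?_
        have hj : j ≠ i := by simpa using hj
        simp [Function.update, hj]
      simp only [Fintype.prod_eq_mul_prod_compl i, h]
      fin_cases b <;> simp [Matrix.mulVec_add, add_mul])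
    (by
      rintro v ⟨i, b⟩ c x
      have h : ∀ w : α × Fin 2 → (α × Fin 2 → ℂ), ∀ z, ∏ j ∈ {i}ᶜ,
          (Function.update w (i, b) z (j, 0) ⬝ᵥ M *ᵥ Function.update w (i, b) z (j, 1))
          = ∏ j ∈ {i}ᶜ, w (j, 0) ⬝ᵥ M *ᵥ w (j, 1) := by
        intro w z
        refine Finset.prod_congr rfl fun j hj => ?_
        have hj : j ≠ i := by simpa using hj
        simp [Function.update, hj]
      simp only [Fintype.prod_eq_mul_prod_compl i, h]
      fin_cases b <;> simp [Matrix.mulVec_smul, mul_assoc])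

lemma alternatization_pairForm (M : Matrix (α × Fin 2) (α × Fin 2) ℂ)
    (v : α × Fin 2 → α × Fin 2 → ℂ) :
    MultilinearMap.alternatization (pairForm M) v = pfSum (of v * M * (of v)ᵀ) := by
  rw [MultilinearMap.alternatization_apply, pfSum]
  refine Finset.sum_congr rfl fun σ _ => ?_
  have h : ∀ p q, (of v * M * (of v)ᵀ) p q = v p ⬝ᵥ M *ᵥ v q := by
    intro p q
    rw [Matrix.mul_assoc, Matrix.mul_apply_eq_vecMul, Matrix.vecMul]
    rfl
  simp only [h, Units.smul_def, zsmul_eq_mul]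
  rfl

/-- Congruence multiplies the Pfaffian sum by the determinant: both sides are alternating in the
rows of `S`, and the space of top-degree alternating forms is one-dimensional. -/
theorem pfSum_conj (S M : Matrix (α × Fin 2) (α × Fin 2) ℂ) :
    pfSum (S * M * Sᵀ) = S.det * pfSum M := by
  have h := (MultilinearMap.alternatization (pairForm M)).eq_smul_basis_det
    (Pi.basisFun ℂ (α × Fin 2))
  have h1 := DFunLike.congr_fun h (fun i j => S i j)
  have h2 : of (⇑(Pi.basisFun ℂ (α × Fin 2)) : α × Fin 2 → α × Fin 2 → ℂ) = 1 := by
    ext i j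
    simp [Matrix.one_apply, Pi.single_apply, eq_comm]
  have h3 : of (fun i j => S i j) = S := rfl
  rw [AlternatingMap.smul_apply, Pi.basisFun_det_apply, alternatization_pairForm,
    alternatization_pairForm, h2, h3] at h1
  simpa [mul_comm] using h1

/-- The standard symplectic matrix: block diagonal with `2 × 2` blocks `(0, 1; -1, 0)`. -/
def stdForm (α : Type*) [DecidableEq α] : Matrix (α × Fin 2) (α × Fin 2) ℂ :=
  of fun p q => if p.1 = q.1 then !![0, 1; -1, 0] p.2 q.2 else 0

/-- Every nonzero term of the Pfaffian sum of the standard form is `1`. Such a `σ` maps pairs to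
pairs, so it is a permutation `τ` of the pairs, which is even on `α × Fin 2`, composed with flips
`ε i` inside the pairs; each flip contributes the same sign to `σ` and to the matrix entry. -/
lemma pfSum_stdForm_term (σ : Equiv.Perm (α × Fin 2))
    (h : ∏ i : α, stdForm α (σ (i, 0)) (σ (i, 1)) ≠ 0) :
    ((Equiv.Perm.sign σ : ℤ) : ℂ) * ∏ i : α, stdForm α (σ (i, 0)) (σ (i, 1)) = 1 := by
  have h0 : ∀ i, stdForm α (σ (i, 0)) (σ (i, 1)) ≠ 0 := fun i =>
    (Finset.prod_ne_zero_iff.mp h) i (Finset.mem_univ i)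
  have h1 : ∀ i, (σ (i, 1)).1 = (σ (i, 0)).1 := by
    intro i
    by_contra hc
    exact h0 i (by simp [stdForm, Ne.symm hc])
  have h2 : ∀ i, (σ (i, 1)).2 ≠ (σ (i, 0)).2 := by
    intro i hc
    refine h0 i ?_
    simp only [stdForm, Matrix.of_apply, hc]
    generalize (σ (i, 0)).2 = b
    fin_cases b <;> simp
  have hinj : Function.Injective fun i => (σ (i, 0)).1 := by
    intro i j hij
    simp only at hij
    have h3 : σ (j, 0) = σ (i, 0) ∨ σ (j, 0) = σ (i, 1) := by
      have := h1 i; have := h2 i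
      simp only [Prod.ext_iff]
      grind
    rcases h3 with h3 | h3
    · simpa using (σ.injective h3).symm
    · simpa using (σ.injective h3)
  let τ : Equiv.Perm α := Equiv.ofBijective _ (Finite.injective_iff_bijective.mp hinj)
  let ε : α → Equiv.Perm (Fin 2) := fun i => if (σ (i, 0)).2 = 0 then 1 else Equiv.swap 0 1
  have hσ : σ = Equiv.prodCongrLeft (fun _ : Fin 2 => τ) * Equiv.prodCongrRight ε := by
    ext1 ⟨i, b⟩
    have e1 := h1 i
    have e2 := h2 i
    have : ((Equiv.prodCongrLeft (fun _ : Fin 2 => τ) * Equiv.prodCongrRight ε :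
      Equiv.Perm (α × Fin 2))) (i, b) = ((σ (i, 0)).1, ε i b) := rfl
    rw [this, Prod.ext_iff]
    simp only [ε]
    fin_cases b
    · split_ifs <;> simp <;> grind
    · split_ifs <;> simp <;> grind
  have hsign : Equiv.Perm.sign σ = ∏ i, Equiv.Perm.sign (ε i) := by
    rw [hσ, Equiv.Perm.sign_mul, Equiv.Perm.sign_prodCongrLeft, Equiv.Perm.sign_prodCongrRight]
    simp
  rw [hsign]
  push_cast
  rw [← Finset.prod_mul_distrib]
  refine Finset.prod_eq_one fun i _ => ?_
  have e2 := h2 i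
  simp only [stdForm, Matrix.of_apply, h1 i, ε, if_true]
  generalize (σ (i, 0)).2 = b at *
  generalize (σ (i, 1)).2 = c at *
  fin_cases b <;> fin_cases c <;> simp at *

theorem pfSum_stdForm_ne_zero : pfSum (stdForm α) ≠ 0 := by
  have h : pfSum (stdForm α) = ((Finset.univ.filter fun σ : Equiv.Perm (α × Fin 2) =>
      ∏ i : α, stdForm α (σ (i, 0)) (σ (i, 1)) ≠ 0).card : ℂ) := by
    rw [Finset.card_filter]
    push_cast
    refine Finset.sum_congr rfl fun σ _ => ?_
    split_ifs with h
    · exact pfSum_stdForm_term σ h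
    · simp [not_not.mp h]
  rw [h, Nat.cast_ne_zero, ← Nat.pos_iff_ne_zero, Finset.card_pos]
  exact ⟨1, by simp [stdForm]⟩

/-- A skew-symmetric matrix supported on at most `2 * n` indices is a sum of `n` terms
`x yᵀ - y xᵀ`. If `B a b ≠ 0`, then subtracting the term built from columns `a` and `b` clears the
rows and columns `a` and `b`, which shrinks the support by two. -/
lemma exists_pairs {ι : Type*} [DecidableEq ι] (n : ℕ) (s : Finset ι) (hs : s.card ≤ 2 * n)
    (B : Matrix ι ι ℂ) (hB : Bᵀ = -B) (hsupp : ∀ i j, B i j ≠ 0 → i ∈ s) :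
    ∃ x y : Fin n → ι → ℂ, ∀ i j, B i j = ∑ k, (x k i * y k j - y k i * x k j) := by
  induction n generalizing s B with
  | zero =>
    have : s = ∅ := by simpa using hs
    subst this
    refine ⟨fun _ _ => 0, fun _ _ => 0, fun i j => ?_⟩
    by_contra hc
    simpa using hsupp i j (by simpa using hc)
  | succ n ih =>
    have hskew : ∀ i j, B i j = - B j i := fun i j => by
      simpa using congrFun (congrFun hB j) i
    by_cases h0 : ∀ i j, B i j = 0
    · exact ⟨fun _ _ => 0, fun _ _ => 0, fun i j => by simp [h0]⟩
    push Not at h0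
    obtain ⟨a, b, hab⟩ := h0
    have hdiag : ∀ i, B i i = 0 := fun i => by
      have := hskew i i
      linear_combination this / 2
    have hne : a ≠ b := fun h => hab (h ▸ hdiag a)
    have ha : a ∈ s := hsupp a b hab
    have hb : b ∈ s := hsupp b a (by rw [hskew]; simpa using hab)
    let B' : Matrix ι ι ℂ := of fun i j =>
      B i j - ((B i a / B a b) * B j b - B i b * (B j a / B a b))
    obtain ⟨x, y, hxy⟩ := ih ((s.erase a).erase b)
      (by
        rw [Finset.card_erase_of_mem (by simp [hb, hne.symm]), Finset.card_erase_of_mem ha]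
        omega) B'
      (by
        ext i j
        simp only [Matrix.transpose_apply, Matrix.neg_apply, Matrix.of_apply, B']
        rw [hskew j i]; ring)
      (by
        intro i j hij
        simp only [Finset.mem_erase]
        refine ⟨?_, ?_, ?_⟩
        · rintro rfl
          apply hij
          simp only [B', Matrix.of_apply, hdiag, hskew i a, hskew j i]
          field_simp
          ring
        · rintro rfl
          apply hij
          simp only [B', Matrix.of_apply, hdiag, hskew j i]
          field_simp
          ring
        · by_contra hi
          have hz : ∀ j, B i j = 0 := fun j => by
            by_contra hc
            exact hi (hsupp i j hc)
          exact hij (by simp [B', hz]))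
    refine ⟨Fin.cons (fun i => B i a / B a b) x, Fin.cons (fun i => B i b) y, fun i j => ?_⟩
    rw [Fin.sum_univ_succ]
    simp only [Fin.cons_zero, Fin.cons_succ, ← hxy i j, B', Matrix.of_apply]
    ring

/-- Every skew-symmetric matrix, singular or not, is the standard form transformed by a
possibly singular `S`. -/
theorem exists_eq_conj_stdForm (B : Matrix (α × Fin 2) (α × Fin 2) ℂ) (hB : Bᵀ = -B) :
    ∃ S : Matrix (α × Fin 2) (α × Fin 2) ℂ, B = S * stdForm α * Sᵀ := by
  obtain ⟨x, y, hxy⟩ := exists_pairs (Fintype.card α) Finset.univ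
    (by simp [mul_comm]) B hB (by simp)
  let e := Fintype.equivFin α
  refine ⟨of fun p q => ![x (e q.1) p, y (e q.1) p] q.2, ?_⟩
  ext i j
  rw [hxy, ← e.sum_comp]
  simp only [Matrix.mul_apply, Matrix.transpose_apply, stdForm, Fintype.sum_prod_type,
    Fin.sum_univ_two]
  refine Finset.sum_congr rfl fun k _ => ?_
  simp
  ring

lemma det_stdForm_ne_zero : (stdForm α).det ≠ 0 := by
  have h : stdForm α * (stdForm α)ᵀ = 1 := by
    ext ⟨i, b⟩ ⟨j, c⟩
    simp only [Matrix.mul_apply, Matrix.transpose_apply, stdForm, Fintype.sum_prod_type,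
      Fin.sum_univ_two, Matrix.one_apply]
    fin_cases b <;> fin_cases c <;> simp
    split_ifs <;> simp
  intro h0
  have := congrArg Matrix.det h
  simp [h0] at this

theorem det_ne_zero_of_pfSum_ne_zero (B : Matrix (α × Fin 2) (α × Fin 2) ℂ) (hB : Bᵀ = -B)
    (h : pfSum B ≠ 0) : B.det ≠ 0 := by
  obtain ⟨S, rfl⟩ := exists_eq_conj_stdForm B hB
  rw [pfSum_conj] at h
  have := left_ne_zero_of_mul h
  simp [this, det_stdForm_ne_zero]

/-- The block matrix `(P, X; Y, Q)`, reindexed so that its index set is again a set of pairs. -/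
def blk (P : Matrix (α × Fin 2) (α × Fin 2) ℂ) (X : Matrix (α × Fin 2) (β × Fin 2) ℂ)
    (Y : Matrix (β × Fin 2) (α × Fin 2) ℂ) (Q : Matrix (β × Fin 2) (β × Fin 2) ℂ) :
    Matrix ((α ⊕ β) × Fin 2) ((α ⊕ β) × Fin 2) ℂ :=
  (fromBlocks P X Y Q).submatrix (Equiv.sumProdDistrib α β (Fin 2))
    (Equiv.sumProdDistrib α β (Fin 2))

lemma blk_mul (P X Y Q) (P' X' Y' Q') :
    (blk P X Y Q : Matrix ((α ⊕ β) × Fin 2) _ ℂ) * blk P' X' Y' Q' =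
      blk (P * P' + X * Y') (P * X' + X * Q') (Y * P' + Q * Y') (Y * X' + Q * Q') := by
  simp only [blk, Matrix.submatrix_mul_equiv, Matrix.fromBlocks_multiply]

lemma blk_transpose (P X Y Q) :
    (blk P X Y Q : Matrix ((α ⊕ β) × Fin 2) _ ℂ)ᵀ = blk Pᵀ Yᵀ Xᵀ Qᵀ := by
  simp only [blk, Matrix.transpose_submatrix, Matrix.fromBlocks_transpose]

lemma stdForm_sum : stdForm (α ⊕ β) = blk (stdForm α) 0 0 (stdForm β) := by
  ext ⟨i, b⟩ ⟨j, c⟩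
  rcases i with i | i <;> rcases j with j | j <;> simp [blk, stdForm]

/-- Multiplicativity on block-diagonal matrices. The values at the standard forms account for the
missing normalisation of `pfSum`. -/
theorem pfSum_blk_diag (P : Matrix (α × Fin 2) (α × Fin 2) ℂ) (hP : Pᵀ = -P)
    (Q : Matrix (β × Fin 2) (β × Fin 2) ℂ) (hQ : Qᵀ = -Q) :
    pfSum (blk P 0 0 Q) * (pfSum (stdForm α) * pfSum (stdForm β)) =
      pfSum (stdForm (α ⊕ β)) * (pfSum P * pfSum Q) := by
  obtain ⟨S, rfl⟩ := exists_eq_conj_stdForm P hP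
  obtain ⟨R, rfl⟩ := exists_eq_conj_stdForm Q hQ
  have h : blk (S * stdForm α * Sᵀ) 0 0 (R * stdForm β * Rᵀ) =
      blk S 0 0 R * stdForm (α ⊕ β) * (blk S 0 0 R)ᵀ := by
    simp [stdForm_sum, blk_mul, blk_transpose]
  have hdet : (blk S 0 0 R).det = S.det * R.det := by
    rw [blk, Matrix.det_submatrix_equiv_self, Matrix.det_fromBlocks_zero₂₁]
  rw [h, pfSum_conj, pfSum_conj, pfSum_conj, hdet]
  ring

/-- The formula for Pfaffian sums: the two Schur complements of the skew-symmetric matrix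
`(C^{-⊤}, Aᵀ; -A, B^{-⊤})`. -/
theorem cauchy_binet_pfSum
    (B : Matrix (β × Fin 2) (β × Fin 2) ℂ) (hB : Bᵀ = -B) (hBpf : pfSum B ≠ 0)
    (C : Matrix (α × Fin 2) (α × Fin 2) ℂ) (hC : Cᵀ = -C) (hCpf : pfSum C ≠ 0)
    (A : Matrix (β × Fin 2) (α × Fin 2) ℂ) :
    pfSum ((C⁻¹)ᵀ - Aᵀ * B * A) / pfSum ((C⁻¹)ᵀ)
      = pfSum ((B⁻¹)ᵀ - A * C * Aᵀ) / pfSum ((B⁻¹)ᵀ) := by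
  have hBu : IsUnit B.det := (det_ne_zero_of_pfSum_ne_zero B hB hBpf).isUnit
  have hCu : IsUnit C.det := (det_ne_zero_of_pfSum_ne_zero C hC hCpf).isUnit
  have hBi : (B⁻¹)ᵀ = -B⁻¹ := by
    rw [Matrix.transpose_nonsing_inv, hB]
    exact Matrix.inv_eq_left_inv (by simp [Matrix.nonsing_inv_mul B hBu])
  have hCi : (C⁻¹)ᵀ = -C⁻¹ := by
    rw [Matrix.transpose_nonsing_inv, hC]
    exact Matrix.inv_eq_left_inv (by simp [Matrix.nonsing_inv_mul C hCu])
  have hBn : pfSum ((B⁻¹)ᵀ) ≠ 0 := by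
    have h := pfSum_conj B⁻¹ B
    rw [Matrix.nonsing_inv_mul B hBu, one_mul] at h
    rw [h]
    exact mul_ne_zero (by simpa [Matrix.det_nonsing_inv] using hBu.ne_zero) hBpf
  have hCn : pfSum ((C⁻¹)ᵀ) ≠ 0 := by
    have h := pfSum_conj C⁻¹ C
    rw [Matrix.nonsing_inv_mul C hCu, one_mul] at h
    rw [h]
    exact mul_ne_zero (by simpa [Matrix.det_nonsing_inv] using hCu.ne_zero) hCpf
  rw [hBi] at hBn ⊢
  rw [hCi] at hCn ⊢
  -- The two block `LDLᵀ` factorizations, eliminating either the upper or the lower diagonal block.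
  have f1 : blk (-C⁻¹) Aᵀ (-A) (-B⁻¹) =
      blk 1 0 (A * C) 1 * blk (-C⁻¹) 0 0 (-B⁻¹ - A * C * Aᵀ) * (blk 1 0 (A * C) 1)ᵀ := by
    simp [blk_mul, blk_transpose, hC, Matrix.mul_assoc, Matrix.mul_nonsing_inv C hCu,
      Matrix.nonsing_inv_mul_cancel_left C _ hCu]
  have f2 : blk (-C⁻¹) Aᵀ (-A) (-B⁻¹) =
      blk 1 (-(Aᵀ * B)) 0 1 * blk (-C⁻¹ - Aᵀ * B * A) 0 0 (-B⁻¹) *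
        (blk 1 (-(Aᵀ * B)) 0 1)ᵀ := by
    simp [blk_mul, blk_transpose, hB, Matrix.mul_assoc, Matrix.mul_nonsing_inv B hBu,
      Matrix.nonsing_inv_mul_cancel_left B _ hBu]
  have d1 : (blk 1 0 (A * C) 1 : Matrix ((α ⊕ β) × Fin 2) _ ℂ).det = 1 := by
    rw [blk, Matrix.det_submatrix_equiv_self, Matrix.det_fromBlocks_zero₁₂]; simp
  have d2 : (blk 1 (-(Aᵀ * B)) 0 1 : Matrix ((α ⊕ β) × Fin 2) _ ℂ).det = 1 := by
    rw [blk, Matrix.det_submatrix_equiv_self, Matrix.det_fromBlocks_zero₂₁]; simp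
  have key := f1.symm.trans f2
  apply_fun pfSum at key
  rw [pfSum_conj, pfSum_conj, d1, d2, one_mul, one_mul] at key
  have k1 := pfSum_blk_diag (-C⁻¹) (by simp [hCi]) (-B⁻¹ - A * C * Aᵀ)
    (by simp [hBi, hC, Matrix.mul_assoc, add_comm])
  have k2 := pfSum_blk_diag (-C⁻¹ - Aᵀ * B * A)
    (by simp [hCi, hB, Matrix.mul_assoc, add_comm]) (-B⁻¹) (by simp [hBi])
  rw [key, k2] at k1
  have k3 := mul_left_cancel₀ pfSum_stdForm_ne_zero k1
  rw [div_eq_div_iff hCn hBn]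
  linear_combination k3

/-- The bijection `(i, b) ↦ 2 * i + b`, under which the pairs `{2 * i, 2 * i + 1}` in the
definition of `pfaffian` become the fibres of the first projection. -/
def pairIndex (n : ℕ) : Fin n × Fin 2 ≃ Fin (2 * n) :=
  finProdFinEquiv.trans (finCongr (mul_comm n 2))

lemma pfaffian_eq_pfSum {n : ℕ} (M : Matrix (Fin (2 * n)) (Fin (2 * n)) ℂ) :
    pfaffian M = ((2 : ℂ) ^ n * (n.factorial : ℂ))⁻¹ *
      pfSum (M.submatrix (pairIndex n) (pairIndex n)) := by
  rw [pfaffian, pfSum, ← (pairIndex n).permCongr.sum_comp]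
  congr 1
  refine Finset.sum_congr rfl fun σ _ => ?_
  rw [Equiv.Perm.sign_permCongr]
  congr 1
  refine Finset.prod_congr rfl fun i _ => ?_
  have h0 : ∀ h, (pairIndex n).symm ⟨2 * i.1, h⟩ = (i, 0) := fun h => by
    rw [Equiv.symm_apply_eq]
    ext
    simp [pairIndex]
  have h1 : ∀ h, (pairIndex n).symm ⟨2 * i.1 + 1, h⟩ = (i, 1) := fun h => by
    rw [Equiv.symm_apply_eq]
    ext
    simp [pairIndex, add_comm]
  simp only [Equiv.permCongr_apply, h0, h1, Matrix.submatrix_apply]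

lemma pfaffian_div_pfaffian {n : ℕ} (M M' : Matrix (Fin (2 * n)) (Fin (2 * n)) ℂ) :
    pfaffian M / pfaffian M' = pfSum (M.submatrix (pairIndex n) (pairIndex n)) /
      pfSum (M'.submatrix (pairIndex n) (pairIndex n)) := by
  have h : ((2 : ℂ) ^ n * (n.factorial : ℂ))⁻¹ ≠ 0 := by
    simp [Nat.factorial_ne_zero]
  rw [pfaffian_eq_pfSum, pfaffian_eq_pfSum, mul_div_mul_left _ _ h]

end PfaffianCB

/-- **Rains' Pfaffian Cauchy–Binet formula.**  For `B` a `2T × 2T` complex antisymmetric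
matrix with nonzero Pfaffian, `C` a `2N × 2N` complex antisymmetric matrix with nonzero
Pfaffian, and `A` an arbitrary complex matrix (a `2N × 2T` array in the bilinear-form sense,
i.e. a linear map recorded so that `Aᵀ B A` is `2N × 2N` and `A C Aᵀ` is `2T × 2T`),
`Pf(C^{-⊤} − Aᵀ B A)/Pf(C^{-⊤}) = Pf(B^{-⊤} − A C Aᵀ)/Pf(B^{-⊤})`,
where `M^{-⊤}` denotes the transpose of the inverse of `M`. -/
theorem pfaffian_cauchy_binet (N T : ℕ)
    (B : Matrix (Fin (2*T)) (Fin (2*T)) ℂ) (hB : Bᵀ = -B) (hBpf : pfaffian B ≠ 0)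
    (C : Matrix (Fin (2*N)) (Fin (2*N)) ℂ) (hC : Cᵀ = -C) (hCpf : pfaffian C ≠ 0)
    (A : Matrix (Fin (2*T)) (Fin (2*N)) ℂ) :
    pfaffian ((C⁻¹)ᵀ - Aᵀ * B * A) / pfaffian ((C⁻¹)ᵀ)
      = pfaffian ((B⁻¹)ᵀ - A * C * Aᵀ) / pfaffian ((B⁻¹)ᵀ) := by
  rw [PfaffianCB.pfaffian_eq_pfSum] at hBpf hCpf
  rw [PfaffianCB.pfaffian_div_pfaffian, PfaffianCB.pfaffian_div_pfaffian]
  have h := PfaffianCB.cauchy_binet_pfSum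
    (B.submatrix (PfaffianCB.pairIndex T) (PfaffianCB.pairIndex T))
    (by rw [Matrix.transpose_submatrix, hB]; rfl) (right_ne_zero_of_mul hBpf)
    (C.submatrix (PfaffianCB.pairIndex N) (PfaffianCB.pairIndex N))
    (by rw [Matrix.transpose_submatrix, hC]; rfl) (right_ne_zero_of_mul hCpf)
    (A.submatrix (PfaffianCB.pairIndex T) (PfaffianCB.pairIndex N))
  simp only [Matrix.inv_submatrix_equiv, Matrix.transpose_submatrix,
    Matrix.submatrix_mul_equiv] at h
  exact h
end

section
/- Let J be the 2T×2T block-diagonal antisymmetric matrix with T diagonal blocks [[0,1],[−1,0]], and let E be the 2T×2T matrix with E_{2t−1,2u−1} = (√(c_t c_u)/2) sgn(y_u − y_t) (for scalars c_t and distinct reals y_t) and all other entries 0. Then B = −J + E is invertible, B^{-⊤} = −J − E′, where E′ is the 2T×2T matrix with E′_{2t,2u} = (√(c_t c_u)/2) sgn(y_u − y_t) and all other entries 0, and Pf(B^{-⊤}) = (−1)^T. -/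
/-!
Split the indices by parity: position `2t + a` corresponds to `(t, a)` with `a ∈ {0, 1}`. With `S` the
antisymmetric `T × T` matrix `S_{tu} = (√(c_t c_u)/2) sgn(y_u − y_t)`, the matrix `B` becomes
`[[S, -1], [1, 0]]`, whose inverse transpose is `[[0, -1], [1, -S]]`; this is `−J − E′`.

For the Pfaffian, the (even, even) block of `−J − E′` vanishes. A permutation `σ` with a non-zero
term therefore puts at least one odd index in each of the `T` pairs `{σ(2t), σ(2t+1)}`; as there are
only `T` odd indices, each pair has exactly one, so only the blocks `±1` contribute and
`σ(t, a) = (τ t, ε_t a)` for a permutation `τ` of the pairs and flips `ε_t` inside them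
(`exists_wreath`). There are `T! · 2^T` such `σ`, the sign of `σ` is `∏ sgn ε_t`
(`sign_wreath`), and the product of entries is `∏ (-sgn ε_t)`; hence each of them contributes
`(-1)^T`, and the normalisation cancels the count.
-/

open Matrix

/-- The `2T × 2T` block-diagonal matrix `J` with `T` diagonal blocks `[[0,1],[−1,0]]`. -/
def Jmat (T : ℕ) : Matrix (Fin (2*T)) (Fin (2*T)) ℝ := Matrix.of fun i j =>
  if j.1 = i.1 + 1 ∧ i.1 % 2 = 0 then (1:ℝ)
  else if i.1 = j.1 + 1 ∧ j.1 % 2 = 0 then -1 else 0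

/-- The `2T × 2T` matrix `E` with `E_{2t,2u} = (√(c_t c_u)/2) sgn(y_u − y_t)` (0-indexed)
and all other entries `0` (this is the matrix written `E_{2t−1,2u−1}` in 1-based indexing). -/
noncomputable def Emat (T : ℕ) (y c : Fin T → ℝ) : Matrix (Fin (2*T)) (Fin (2*T)) ℝ :=
  Matrix.of fun i j =>
    if i.1 % 2 = 0 ∧ j.1 % 2 = 0 then
      Real.sqrt (c ⟨i.1/2, by have := i.2; omega⟩ * c ⟨j.1/2, by have := j.2; omega⟩) / 2
        * Real.sign (y ⟨j.1/2, by have := j.2; omega⟩ - y ⟨i.1/2, by have := i.2; omega⟩)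
    else 0

/-- The `2T × 2T` matrix `E′` with `E′_{2t+1,2u+1} = (√(c_t c_u)/2) sgn(y_u − y_t)`
(0-indexed; `E′_{2t,2u}` in the paper's 1-based indexing) and all other entries `0`. -/
noncomputable def Emat' (T : ℕ) (y c : Fin T → ℝ) : Matrix (Fin (2*T)) (Fin (2*T)) ℝ :=
  Matrix.of fun i j =>
    if i.1 % 2 = 1 ∧ j.1 % 2 = 1 then
      Real.sqrt (c ⟨i.1/2, by have := i.2; omega⟩ * c ⟨j.1/2, by have := j.2; omega⟩) / 2
        * Real.sign (y ⟨j.1/2, by have := j.2; omega⟩ - y ⟨i.1/2, by have := i.2; omega⟩)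
    else 0

/-- The bijection `(t, a) ↦ 2t + a`. -/
def pairEquiv (T : ℕ) : Fin T × Fin 2 ≃ Fin (2 * T) :=
  finProdFinEquiv.trans (finCongr (Nat.mul_comm T 2))

lemma pairEquiv_val (T : ℕ) (p : Fin T × Fin 2) : (pairEquiv T p).1 = 2 * p.1.1 + p.2.1 := by
  simp [pairEquiv, finProdFinEquiv, Nat.add_comm]

/-- The `T × T` block `S_{tu} = (√(c_t c_u)/2) sgn(y_u − y_t)` shared by `E` and `E′`. -/
noncomputable def signBlock {T : ℕ} (y c : Fin T → ℝ) (t u : Fin T) : ℝ :=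
  Real.sqrt (c t * c u) / 2 * Real.sign (y u - y t)

lemma signBlock_swap {T : ℕ} (y c : Fin T → ℝ) (t u : Fin T) :
    signBlock y c u t = - signBlock y c t u := by
  unfold signBlock
  rw [mul_comm (c u), ← neg_sub (y u) (y t), Real.sign_neg]
  ring

lemma Jmat_pair (T : ℕ) (t u : Fin T) (a b : Fin 2) :
    Jmat T (pairEquiv T (t, a)) (pairEquiv T (u, b)) =
      if t = u then (b.1 : ℝ) - (a.1 : ℝ) else 0 := by
  simp only [Jmat, Matrix.of_apply, pairEquiv_val, Fin.ext_iff]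
  fin_cases a <;> fin_cases b <;> simp <;> split_ifs <;> first | rfl | omega

lemma Emat_pair (T : ℕ) (y c : Fin T → ℝ) (t u : Fin T) (a b : Fin 2) :
    Emat T y c (pairEquiv T (t, a)) (pairEquiv T (u, b)) =
      if a = 0 ∧ b = 0 then signBlock y c t u else 0 := by
  simp only [Emat, Matrix.of_apply, pairEquiv_val, signBlock]
  fin_cases a <;> fin_cases b <;> simp

lemma Emat'_pair (T : ℕ) (y c : Fin T → ℝ) (t u : Fin T) (a b : Fin 2) :
    Emat' T y c (pairEquiv T (t, a)) (pairEquiv T (u, b)) =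
      if a = 1 ∧ b = 1 then signBlock y c t u else 0 := by
  have h (n : ℕ) : (2 * n + 1) / 2 = n := by omega
  simp only [Emat', Matrix.of_apply, pairEquiv_val, signBlock]
  fin_cases a <;> fin_cases b <;> simp [h]

lemma B_mul_inverse (T : ℕ) (y c : Fin T → ℝ) :
    (-Jmat T + Emat T y c) * (-Jmat T - Emat' T y c)ᵀ = 1 := by
  ext i j
  obtain ⟨⟨t, a⟩, rfl⟩ := (pairEquiv T).surjective i
  obtain ⟨⟨u, b⟩, rfl⟩ := (pairEquiv T).surjective j
  rw [Matrix.mul_apply, ← (pairEquiv T).sum_comp, Fintype.sum_prod_type]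
  simp only [Fin.sum_univ_two, Matrix.transpose_apply, Matrix.add_apply, Matrix.sub_apply,
    Matrix.neg_apply, Jmat_pair, Emat_pair, Emat'_pair, Matrix.one_apply,
    EmbeddingLike.apply_eq_iff_eq, Prod.mk.injEq]
  have hS := signBlock_swap y c t u
  fin_cases a <;> fin_cases b <;>
    simp [Finset.sum_add_distrib, hS, eq_comm]
  split_ifs <;> simp

/-- The permutation `(t, a) ↦ (τ t, ε_t a)`: permute the pairs by `τ`, and the inside of pair `t`
by `ε_t`. -/
def wreath {T : ℕ} (x : Equiv.Perm (Fin T) × (Fin T → Equiv.Perm (Fin 2))) :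
    Equiv.Perm (Fin T × Fin 2) :=
  (Equiv.prodCongrRight x.2).trans (Equiv.prodCongrLeft fun _ => x.1)

lemma wreath_apply {T : ℕ} (x : Equiv.Perm (Fin T) × (Fin T → Equiv.Perm (Fin 2)))
    (t : Fin T) (a : Fin 2) : wreath x (t, a) = (x.1 t, x.2 t a) := rfl

lemma wreath_injective (T : ℕ) : Function.Injective (wreath (T := T)) := by
  rintro ⟨τ, ε⟩ ⟨τ', ε'⟩ h
  have h' (t : Fin T) (a : Fin 2) : (τ t, ε t a) = (τ' t, ε' t a) := by
    simpa [wreath_apply] using congrArg (fun σ => σ (t, a)) h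
  simp only [Prod.mk.injEq] at h'
  refine Prod.ext (Equiv.ext fun t => (h' t 0).1) ?_
  exact funext fun t => Equiv.ext fun a => (h' t a).2

/-- A permutation `τ` of the pairs is even, since it moves the two coordinates in parallel. -/
lemma sign_wreath {T : ℕ} (x : Equiv.Perm (Fin T) × (Fin T → Equiv.Perm (Fin 2))) :
    Equiv.Perm.sign (wreath x) = ∏ t, Equiv.Perm.sign (x.2 t) := by
  rw [wreath, Equiv.Perm.sign_trans, Equiv.Perm.sign_prodCongrRight,
    Equiv.Perm.sign_prodCongrLeft]
  simp

/-- A permutation that sends each pair into a single pair is of the form `wreath x`. -/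
lemma exists_wreath {T : ℕ} (σ : Equiv.Perm (Fin T × Fin 2))
    (h : ∀ t, (σ (t, 0)).1 = (σ (t, 1)).1) : ∃ x, wreath x = σ := by
  have h1 (t : Fin T) (a : Fin 2) : (σ (t, a)).1 = (σ (t, 0)).1 := by
    fin_cases a
    · rfl
    · exact (h t).symm
  have hτ : Function.Bijective fun t => (σ (t, 0)).1 := by
    refine Function.Surjective.bijective_of_finite fun u => ?_
    obtain ⟨⟨t, a⟩, hta⟩ := σ.surjective (u, 0)
    exact ⟨t, by simp only [← h1 t a, hta]⟩
  have hε (t : Fin T) : Function.Bijective fun a => (σ (t, a)).2 := by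
    refine Function.Injective.bijective_of_finite fun a b hab => ?_
    have := σ.injective (Prod.ext ((h1 t a).trans (h1 t b).symm) hab)
    exact (Prod.mk.inj this).2
  refine ⟨(Equiv.ofBijective _ hτ, fun t => Equiv.ofBijective _ (hε t)), ?_⟩
  ext1 ⟨t, a⟩
  exact Prod.ext (h1 t a).symm rfl

/-- If no pair is sent to two even indices, then by counting odd indices every pair is sent to one
even and one odd index. -/
lemma parity_sum_eq_one {T : ℕ} (σ : Equiv.Perm (Fin T × Fin 2))
    (h : ∀ t, 1 ≤ (σ (t, 0)).2.1 + (σ (t, 1)).2.1) (t : Fin T) :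
    (σ (t, 0)).2.1 + (σ (t, 1)).2.1 = 1 := by
  have hsum : ∑ t : Fin T, ((σ (t, 0)).2.1 + (σ (t, 1)).2.1) = ∑ _t : Fin T, 1 := by
    have := Equiv.sum_comp σ fun p : Fin T × Fin 2 => p.2.1 
    simpa [Fintype.sum_prod_type, Fin.sum_univ_two] using this
  exact ((Finset.sum_eq_sum_iff_of_le fun t _ => h t).1 hsum.symm t (Finset.mem_univ t)).symm

lemma perm_fin_two_entry (ε : Equiv.Perm (Fin 2)) :
    ((ε 1).1 : ℝ) - ((ε 0).1 : ℝ) = ((Equiv.Perm.sign ε : ℤ) : ℝ) := by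
  have : ((ε 1).1 : ℤ) - ((ε 0).1 : ℤ) = (Equiv.Perm.sign ε : ℤ) := by
    revert ε; decide
  exact_mod_cast this

lemma pfaffian_inverse (T : ℕ) (y c : Fin T → ℝ) :
    pfaffian (n := T) (-Jmat T - Emat' T y c) = (-1 : ℝ) ^ T := by
  set M := -Jmat T - Emat' T y c with hM
  have hentry (p q : Fin T × Fin 2) : M (pairEquiv T p) (pairEquiv T q) =
      -(if p.1 = q.1 then (q.2.1 : ℝ) - (p.2.1 : ℝ) else 0) -
        (if p.2 = 1 ∧ q.2 = 1 then signBlock y c p.1 q.1 else 0) := by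
    obtain ⟨t, a⟩ := p
    obtain ⟨u, b⟩ := q
    simp only [hM, Matrix.sub_apply, Matrix.neg_apply, Jmat_pair, Emat'_pair]
  -- the sum over permutations, transported to `Fin T × Fin 2`
  have hsum : (∑ σ : Equiv.Perm (Fin (2*T)), ((Equiv.Perm.sign σ : ℤ) : ℝ) *
      ∏ i : Fin T, M (σ ⟨2*i.1, by have := i.2; omega⟩) (σ ⟨2*i.1+1, by have := i.2; omega⟩)) =
      ∑ σ : Equiv.Perm (Fin T × Fin 2), ((Equiv.Perm.sign σ : ℤ) : ℝ) *
        ∏ t : Fin T, M (pairEquiv T (σ (t, 0))) (pairEquiv T (σ (t, 1))) := by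
    rw [← (pairEquiv T).permCongr.sum_comp]
    refine Finset.sum_congr rfl fun σ _ => ?_
    rw [Equiv.Perm.sign_permCongr]
    congr 1
    refine Finset.prod_congr rfl fun t _ => ?_
    have h0 : (⟨2*t.1, by have := t.2; omega⟩ : Fin (2*T)) = pairEquiv T (t, 0) :=
      Fin.ext (by simp [pairEquiv_val])
    have h1 : (⟨2*t.1+1, by have := t.2; omega⟩ : Fin (2*T)) = pairEquiv T (t, 1) :=
      Fin.ext (by simp [pairEquiv_val])
    rw [h0, h1]
    simp [Equiv.permCongr_apply]
  have hwreath : (∑ σ : Equiv.Perm (Fin T × Fin 2), ((Equiv.Perm.sign σ : ℤ) : ℝ) *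
        ∏ t : Fin T, M (pairEquiv T (σ (t, 0))) (pairEquiv T (σ (t, 1)))) =
      ∑ _x : Equiv.Perm (Fin T) × (Fin T → Equiv.Perm (Fin 2)), (-1 : ℝ) ^ T := by
    symm
    refine Finset.sum_of_injOn wreath (wreath_injective T).injOn (by simp) ?_ ?_
    · intro σ _ hσ
      by_contra hne
      have hprod := right_ne_zero_of_mul hne
      rw [Finset.prod_ne_zero_iff] at hprod
      have hodd : ∀ t, 1 ≤ (σ (t, 0)).2.1 + (σ (t, 1)).2.1 := by
        intro t
        by_contra hlt
        have ha : (σ (t, 0)).2 = 0 := Fin.ext (by simp only [Fin.val_zero]; omega)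
        have hb : (σ (t, 1)).2 = 0 := Fin.ext (by simp only [Fin.val_zero]; omega)
        exact hprod t (Finset.mem_univ t) (by simp [hentry, ha, hb])
      obtain ⟨x, hx⟩ := exists_wreath σ fun t => by
        by_contra hne'
        have hone := parity_sum_eq_one σ hodd t
        refine hprod t (Finset.mem_univ t) ?_
        have : ¬ ((σ (t, 0)).2 = 1 ∧ (σ (t, 1)).2 = 1) := by
          rintro ⟨ha, hb⟩
          simp [ha, hb] at hone
        rw [hentry, if_neg hne', if_neg this]
        simp
      exact hσ ⟨x, by simp, hx⟩
    · intro x _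
      have hM' (t : Fin T) : M (pairEquiv T (wreath x (t, 0))) (pairEquiv T (wreath x (t, 1))) =
          -((Equiv.Perm.sign (x.2 t) : ℤ) : ℝ) := by
        have : ¬ (x.2 t 0 = 1 ∧ x.2 t 1 = 1) := fun h =>
          absurd ((x.2 t).injective (h.1.trans h.2.symm)) (by decide)
        rw [hentry, wreath_apply, wreath_apply, if_pos rfl, if_neg this, perm_fin_two_entry,
          sub_zero]
      simp only [hM', sign_wreath, Units.coe_prod, Int.cast_prod]
      rw [← Finset.prod_mul_distrib]
      have hsq (t : Fin T) : ((Equiv.Perm.sign (x.2 t) : ℤ) : ℝ) *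
          -((Equiv.Perm.sign (x.2 t) : ℤ) : ℝ) = -1 := by
        rcases Int.units_eq_one_or (Equiv.Perm.sign (x.2 t)) with h | h <;> simp [h]
      simp [hsq]
  rw [pfaffian, hsum, hwreath]
  have hcard : (Fintype.card (Equiv.Perm (Fin T) × (Fin T → Equiv.Perm (Fin 2))) : ℝ) =
      2 ^ T * (T.factorial : ℝ) := by
    simp [Fintype.card_perm, mul_comm]
  rw [Finset.sum_const, Finset.card_univ, nsmul_eq_mul, hcard, inv_mul_cancel_left₀]
  positivity

/-- **The inverse transpose of `B = −J + E`:**  `B` is invertible,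
`B^{-⊤} = −J − E′`, and `Pf(B^{-⊤}) = (−1)^T`. -/
theorem Bmat_inv_transpose (T : ℕ) (y : Fin T → ℝ) (hy : Function.Injective y)
    (c : Fin T → ℝ) :
    IsUnit (-Jmat T + Emat T y c)
    ∧ ((-Jmat T + Emat T y c)⁻¹)ᵀ = -Jmat T - Emat' T y c
    ∧ pfaffian (n := T) (((-Jmat T + Emat T y c)⁻¹)ᵀ) = (-1 : ℝ)^T := by
  have hmul := B_mul_inverse T y c
  have hinv : ((-Jmat T + Emat T y c)⁻¹)ᵀ = -Jmat T - Emat' T y c := by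
    rw [Matrix.inv_eq_right_inv hmul, Matrix.transpose_transpose]
  refine ⟨IsUnit.of_mul_eq_one _ hmul, hinv, ?_⟩
  rw [hinv]
  exact pfaffian_inverse T y c
end
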